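/- Let F = F(a₁, …, aₙ) be a free group with ordered basis A = (a₁, …, aₙ). If a subgroup H ≤ F is in echelon form with respect to A, then Dep(H), the subgroup generated by all elements of F that depend on H, is also in echelon form with respect to A. -/

import Mathlib

open scoped Monoid.Coprod

variable {F : Type*}

/-- The canonical homomorphism `φ_g : H ∗ ⟨x⟩ → F` from the free product of `H` with an
infinite cyclic group (the free group on one generator `x`), restricting to the inclusion
`H ↪ F` and sending `x` to `g`. -/
noncomputable def phi [Group F] (H : Subgroup F) (g : F) :
    (↥H ∗ FreeGroup Unit) →* F :=
  Monoid.Coprod.lift H.subtype (FreeGroup.lift fun _ => g)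

/-- `g` depends on `H` (is algebraic over `H`) if `φ_g` is not injective. -/
def Depends [Group F] (H : Subgroup F) (g : F) : Prop :=
  ¬ Function.Injective (phi H g)

/-- `dep H`: the set of elements of `F` that depend on `H`. -/
def depSet [Group F] (H : Subgroup F) : Set F := {g | Depends H g}

/-- `Dep H`: the subgroup generated by the elements that depend on `H`. -/
noncomputable def DepSubgroup [Group F] (H : Subgroup F) : Subgroup F :=
  Subgroup.closure (depSet H)

/-- The rank of a subgroup: the minimal cardinality of a generating set. For subgroups of
free groups this equals the cardinality of a free basis. -/
noncomputable def rk [Group F] (H : Subgroup F) : Cardinal :=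
  ⨅ S : {S : Set F // Subgroup.closure S = H}, Cardinal.mk S.1


/-- `F_i = ⟨a₁, …, a_i⟩`, the subgroup of `FreeGroup (Fin n)` generated by the first `i`
generators. -/
def stageSubgroup (n : ℕ) (i : ℕ) : Subgroup (FreeGroup (Fin n)) :=
  Subgroup.closure (FreeGroup.of '' {j : Fin n | (j : ℕ) < i})

/-- `H` is in echelon form with respect to the ordered basis of `FreeGroup (Fin n)`:
for each `1 ≤ i ≤ n`, `rank (H ∩ F_i) ≤ rank (H ∩ F_{i-1}) + 1`. -/
def IsEchelon {n : ℕ} (H : Subgroup (FreeGroup (Fin n))) : Prop :=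
  ∀ i : ℕ, 1 ≤ i → i ≤ n →
    rk (H ⊓ stageSubgroup n i) ≤ rk (H ⊓ stageSubgroup n (i - 1)) + 1

/-! ### Free groups of finite rank are Hopfian -/

theorem FreeGroup.exists_perm_apply_ne_one {α : Type*} (g : FreeGroup α) (hg : g ≠ 1) :
    ∃ (S : Finset (FreeGroup α)) (φ : FreeGroup α →* Equiv.Perm S), φ g ≠ 1 := by
  classical
  let L := g.toWord
  let S : Finset (FreeGroup α) := (Finset.range (L.length + 1)).image fun k => mk (L.drop k)
  have hS : ∀ L', L' <:+ L → mk L' ∈ S := by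
    rintro L' ⟨L₀, hL⟩
    refine Finset.mem_image.2 ⟨L₀.length, ?_, ?_⟩
    · rw [← hL]; simp
    · rw [← hL]; simp
  let e : ∀ a : α, {x : S // of a * x.1 ∈ S} ≃ {x : S // (of a)⁻¹ * x.1 ∈ S} := fun a =>
    { toFun := fun x => ⟨⟨of a * x.1.1, x.2⟩, by simp⟩
      invFun := fun x => ⟨⟨(of a)⁻¹ * x.1.1, x.2⟩, by simp⟩
      left_inv := fun x => by simp
      right_inv := fun x => by simp }
  let P : α → Equiv.Perm S := fun a => (e a).extendSubtype
  have hP : ∀ a (x : S) (hx : of a * x.1 ∈ S), P a x = ⟨of a * x.1, hx⟩ := fun a x hx =>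
    Equiv.extendSubtype_apply_of_mem (e a) x hx
  have hP' : ∀ a (x : S) (hx : (of a)⁻¹ * x.1 ∈ S), (P a)⁻¹ x = ⟨(of a)⁻¹ * x.1, hx⟩ := by
    intro a x hx
    rw [Equiv.Perm.inv_eq_iff_eq, hP a _ (by simp)]
    simp
  have h1 : (1 : FreeGroup α) ∈ S := hS [] (List.nil_suffix)
  have key : ∀ L' (h : L' <:+ L), lift P (mk L') ⟨1, h1⟩ = ⟨mk L', hS L' h⟩ := by
    intro L'
    induction L' with
    | nil => intro h; rfl
    | cons p L' ih =>
      intro h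
      have h' : L' <:+ L := (List.suffix_cons p L').trans h
      obtain ⟨a, b⟩ := p
      have hm : mk ((a, b) :: L') = mk [(a, b)] * mk L' := by rw [mul_mk]; rfl
      have hmem := hS _ h
      cases b with
      | true =>
        have hof : mk [(a, true)] = of a := rfl
        simp only [hm, hof] at hmem ⊢
        rw [_root_.map_mul, Equiv.Perm.mul_apply, ih h', lift_apply_of]
        exact hP a ⟨mk L', hS L' h'⟩ hmem
      | false =>
        have hof : mk [(a, false)] = (of a)⁻¹ := rfl
        simp only [hm, hof] at hmem ⊢
        rw [_root_.map_mul, _root_.map_inv, Equiv.Perm.mul_apply, ih h', lift_apply_of]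
        exact hP' a ⟨mk L', hS L' h'⟩ hmem
  refine ⟨S, lift P, fun h => hg ?_⟩
  have := key L List.suffix_rfl
  have hL : mk L = g := mk_toWord
  simp only [hL, h, Equiv.Perm.one_apply, Subtype.mk.injEq] at this
  exact this.symm

theorem FreeGroup.injective_of_surjective {α : Type*} [Finite α]
    (f : FreeGroup α →* FreeGroup α) (hf : Function.Surjective f) : Function.Injective f := by
  rw [injective_iff_map_eq_one]
  intro g hfg
  by_contra hg
  obtain ⟨S, φ, hφ⟩ := exists_perm_apply_ne_one g hg
  have : Finite (FreeGroup α →* Equiv.Perm S) := Finite.of_equiv _ (lift (β := Equiv.Perm S))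
  have hinj : Function.Injective fun ψ : FreeGroup α →* Equiv.Perm S => ψ.comp f :=
    fun ψ₁ ψ₂ h => (MonoidHom.cancel_right hf).1 h
  obtain ⟨ψ, rfl⟩ := Finite.surjective_of_injective hinj φ
  exact hφ (by simp [hfg])

theorem FreeGroup.injective_of_surjective_of_mulEquiv {α G : Type*} [Finite α] [Group G]
    (e : FreeGroup α ≃* G) (f : FreeGroup α →* G) (hf : Function.Surjective f) :
    Function.Injective f := by
  have := injective_of_surjective (e.symm.toMonoidHom.comp f) (e.symm.surjective.comp hf)
  exact Function.Injective.of_comp this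

theorem FreeGroup.card_le_of_surjective {α β : Type*} [Finite α]
    (f : FreeGroup α →* FreeGroup β) (hf : Function.Surjective f) :
    Finite β ∧ Nat.card β ≤ Nat.card α := by
  let M := Multiplicative (ZMod 2)
  let Φ : (β → M) → (α → M) := fun u => lift.symm ((lift u).comp f)
  have hΦ : Function.Injective Φ := fun u v h =>
    lift.injective ((MonoidHom.cancel_right hf).1 (lift.symm.injective h))
  have hfin : Finite (β → M) := Finite.of_injective Φ hΦ
  have hβ : Finite β := by
    classical
    refine Finite.of_injective (fun b : β => (Pi.mulSingle b (Multiplicative.ofAdd 1) : β → M))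
      fun a b h => ?_
    by_contra hab
    have := congrFun h a
    simp only [Pi.mulSingle_eq_same, Pi.mulSingle_eq_of_ne hab] at this
    exact absurd this (by decide)
  refine ⟨hβ, ?_⟩
  have h := Nat.card_le_card_of_injective Φ hΦ
  have hM : Nat.card M = 2 := by simp [M]
  rw [Nat.card_fun, Nat.card_fun, hM] at h
  exact (Nat.pow_le_pow_iff_right (by norm_num)).1 h

/-! ### Rank of subgroups -/

theorem rk_range_le {α F : Type} [Group F] (f : FreeGroup α →* F) : rk f.range ≤ Cardinal.mk α := by
  have h : Subgroup.closure (Set.range (f ∘ FreeGroup.of)) = f.range := by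
    rw [Set.range_comp, ← MonoidHom.map_closure, FreeGroup.closure_range_of, MonoidHom.range_eq_map]
  exact (ciInf_le' _ (⟨_, h⟩ : {S : Set F // Subgroup.closure S = f.range})).trans
    Cardinal.mk_range_le

theorem exists_closure_eq_mk_eq_rk {F : Type*} [Group F] (K : Subgroup F) :
    ∃ S : Set F, Subgroup.closure S = K ∧ Cardinal.mk S = rk K := by
  have : Nonempty {S : Set F // Subgroup.closure S = K} := ⟨⟨K, K.closure_eq⟩⟩
  obtain ⟨S, hS⟩ := ciInf_mem fun S : {S : Set F // Subgroup.closure S = K} => Cardinal.mk S.1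
  exact ⟨S.1, S.2, hS⟩

theorem exists_range_eq_of_rk_le {F : Type} [Group F] {K : Subgroup F} {r : ℕ} (h : rk K ≤ r) :
    ∃ f : FreeGroup (Fin r) →* F, f.range = K := by
  obtain ⟨S, hS, hcard⟩ := exists_closure_eq_mk_eq_rk K
  have hle : Cardinal.mk S ≤ Cardinal.mk (Fin r) := by rw [hcard, Cardinal.mk_fin]; exact h
  obtain ⟨e⟩ := Cardinal.le_def _ _ |>.1 hle
  refine ⟨FreeGroup.lift (Function.extend e (fun s => (s : F)) 1), ?_⟩
  rw [FreeGroup.range_lift_eq_closure, ← hS]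
  apply le_antisymm
  · rw [Subgroup.closure_le]
    rintro _ ⟨i, rfl⟩
    by_cases hi : ∃ s, e s = i
    · obtain ⟨s, rfl⟩ := hi
      rw [e.injective.extend_apply]
      exact Subgroup.subset_closure s.2
    · rw [Function.extend_apply' _ _ _ hi]
      exact one_mem _
  · apply Subgroup.closure_mono
    intro s hs
    exact ⟨e ⟨s, hs⟩, e.injective.extend_apply _ _ _⟩

theorem exists_surjective_of_rk_le {F : Type} [Group F] {K : Subgroup F} {r : ℕ} (h : rk K ≤ r) :
    ∃ f : FreeGroup (Fin r) →* K, Function.Surjective f := by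
  obtain ⟨f, rfl⟩ := exists_range_eq_of_rk_le h
  exact ⟨f.rangeRestrict, f.rangeRestrict_surjective⟩

theorem rk_le_of_surjective {F G : Type} [Group F] [Group G] {K : Subgroup F} {L : Subgroup G}
    (ρ : K →* L) (hρ : Function.Surjective ρ) {r : ℕ} (h : rk K ≤ r) : rk L ≤ r := by
  obtain ⟨f, hf⟩ := exists_surjective_of_rk_le h
  have := rk_range_le (L.subtype.comp (ρ.comp f))
  rwa [MonoidHom.range_comp, MonoidHom.range_eq_top.2 (hρ.comp hf : Function.Surjective (ρ.comp f)),
    ← MonoidHom.range_eq_map, Subgroup.range_subtype, Cardinal.mk_fin] at this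

theorem rk_eq_of_mulEquiv {F : Type} [Group F] {K : Subgroup F} {s : ℕ}
    (e : FreeGroup (Fin s) ≃* K) : rk K = s := by
  have hle : rk K ≤ s := by
    have := rk_range_le (K.subtype.comp e.toMonoidHom)
    rwa [MonoidHom.range_comp, MonoidHom.range_eq_top.2 e.surjective, ← MonoidHom.range_eq_map,
      Subgroup.range_subtype, Cardinal.mk_fin] at this
  obtain ⟨r, hr⟩ := Cardinal.lt_aleph0.1 (hle.trans_lt Cardinal.natCast_lt_aleph0)
  obtain ⟨f, hf⟩ := exists_surjective_of_rk_le hr.le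
  have := (FreeGroup.card_le_of_surjective (e.symm.toMonoidHom.comp f)
    (e.symm.surjective.comp hf)).2
  simp only [Nat.card_fin] at this
  exact le_antisymm hle (by rw [hr]; exact_mod_cast this)

theorem exists_mulEquiv_of_rk_le {F : Type} [Group F] [IsFreeGroup F] {K : Subgroup F} {r : ℕ}
    (h : rk K ≤ r) : ∃ s ≤ r, rk K = s ∧ Nonempty (FreeGroup (Fin s) ≃* K) := by
  obtain ⟨f, hf⟩ := exists_surjective_of_rk_le h
  obtain ⟨hfin, hcard⟩ := FreeGroup.card_le_of_surjective
    ((IsFreeGroup.toFreeGroup K).toMonoidHom.comp f)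
    ((IsFreeGroup.toFreeGroup K).surjective.comp hf)
  let e : FreeGroup (Fin (Nat.card (IsFreeGroup.Generators K))) ≃* K :=
    (FreeGroup.freeGroupCongr (Finite.equivFin _).symm).trans (IsFreeGroup.toFreeGroup K).symm
  exact ⟨_, by simpa using hcard, rk_eq_of_mulEquiv e, ⟨e⟩⟩

theorem le_of_retraction_of_rk_le {F : Type} [Group F] [IsFreeGroup F] {K L : Subgroup F}
    {r : ℕ} (hL : L ≤ K) (ρ : K →* L) (hρ : ∀ l : L, ρ (Subgroup.inclusion hL l) = l)
    (hK : rk K ≤ r) (h : (r : Cardinal) ≤ rk L) : K ≤ L := by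
  have hsurj : Function.Surjective ρ := fun l => ⟨_, hρ l⟩
  obtain ⟨s, hs, hKs, ⟨e⟩⟩ := exists_mulEquiv_of_rk_le hK
  obtain ⟨t, ht, hLt, ⟨e'⟩⟩ := exists_mulEquiv_of_rk_le (rk_le_of_surjective ρ hsurj hKs.le)
  obtain rfl : s = t := by
    rw [hLt] at h
    have : r ≤ t := by exact_mod_cast h
    omega
  have hinj := FreeGroup.injective_of_surjective_of_mulEquiv e' (ρ.comp e.toMonoidHom)
    (hsurj.comp e.surjective)
  have hinj' : Function.Injective ρ := by
    intro x y hxy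
    obtain ⟨x, rfl⟩ := e.surjective x
    obtain ⟨y, rfl⟩ := e.surjective y
    rw [hinj hxy]
  intro k hk
  have : Subgroup.inclusion hL (ρ ⟨k, hk⟩) = ⟨k, hk⟩ := hinj' (hρ _)
  have hval : (ρ ⟨k, hk⟩ : F) = k := congrArg Subtype.val this
  have hmem := (ρ ⟨k, hk⟩).2
  rwa [hval] at hmem

theorem rk_le_of_forall_finite {F : Type} [Group F] [IsFreeGroup F] {K : Subgroup F} {r : ℕ}
    (h : ∀ T : Set F, T.Finite → T ⊆ K → ∃ E ≤ K, T ⊆ E ∧ rk E ≤ r) : rk K ≤ r := by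
  have hK : rk K ≤ Cardinal.mk (IsFreeGroup.Generators K) := by
    have := rk_range_le (K.subtype.comp (IsFreeGroup.toFreeGroup K).symm.toMonoidHom)
    rwa [MonoidHom.range_comp, MonoidHom.range_eq_top.2 (IsFreeGroup.toFreeGroup K).symm.surjective,
      ← MonoidHom.range_eq_map, Subgroup.range_subtype] at this
  refine hK.trans (not_lt.1 fun hlt => ?_)
  have hle : Cardinal.mk (Fin (r + 1)) ≤ Cardinal.mk (IsFreeGroup.Generators K) := by
    rw [Cardinal.mk_fin, Nat.cast_add_one]
    exact Cardinal.add_one_le_of_lt hlt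
  obtain ⟨j⟩ := Cardinal.le_def _ _ |>.1 hle
  let T : Fin (r + 1) → F := fun i => (IsFreeGroup.of (j i) : K)
  obtain ⟨E, hEK, hTE, hE⟩ := h (Set.range T) (Set.finite_range T) (by
    rintro _ ⟨i, rfl⟩
    exact (IsFreeGroup.of (j i) : K).2)
  obtain ⟨f, hf⟩ := exists_surjective_of_rk_le hE
  let p : K →* FreeGroup (Fin (r + 1)) := IsFreeGroup.lift (Function.extend j FreeGroup.of 1)
  let q : FreeGroup (Fin r) →* FreeGroup (Fin (r + 1)) :=
    (p.comp (Subgroup.inclusion hEK)).comp f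
  have hq : Function.Surjective q := by
    refine Function.Surjective.comp (g := p.comp (Subgroup.inclusion hEK)) ?_ hf
    rw [← MonoidHom.range_eq_top, eq_top_iff, ← FreeGroup.closure_range_of, Subgroup.closure_le]
    rintro _ ⟨i, rfl⟩
    refine ⟨⟨T i, hTE ⟨i, rfl⟩⟩, ?_⟩
    change p (IsFreeGroup.of (j i)) = _
    rw [IsFreeGroup.lift_of, j.injective.extend_apply]
  have := (FreeGroup.card_le_of_surjective q hq).2
  simp at this

/-! ### Adjoining dependent elements -/

theorem Monoid.Coprod.map_inclusion_injective {F Z : Type*} [Group F] [Group Z]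
    {H E : Subgroup F} (hHE : H ≤ E) :
    Function.Injective (Monoid.Coprod.map (Subgroup.inclusion hHE) (MonoidHom.id Z)) := by
  have hout : (QuotientGroup.mk 1 : F ⧸ H).out ∈ H := by
    have := QuotientGroup.out_eq' (QuotientGroup.mk 1 : F ⧸ H)
    rw [QuotientGroup.eq] at this
    simpa using this
  obtain ⟨σ, hσ, hσ1⟩ : ∃ σ : F ⧸ H → F, (∀ q, (σ q : F ⧸ H) = q) ∧ σ (1 : F) = 1 := by
    refine ⟨fun q => q.out * (QuotientGroup.mk 1 : F ⧸ H).out⁻¹, fun q => ?_, mul_inv_cancel _⟩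
    rw [QuotientGroup.mk_mul_of_mem _ (inv_mem hout), QuotientGroup.out_eq']
  have hc : ∀ (e : F) (q : F ⧸ H), (σ (e • q))⁻¹ * e * σ q ∈ H := by
    intro e q
    rw [mul_assoc, ← QuotientGroup.eq, hσ, ← smul_eq_mul, ← MulAction.Quotient.smul_coe, hσ]
  let W := H ∗ Z
  let a : E →* Function.End ((F ⧸ H) × W) :=
    { toFun := fun e p => ((e : F) • p.1, inl ⟨_, hc e p.1⟩ * p.2)
      map_one' := by
        funext p
        have : (⟨_, hc 1 p.1⟩ : H) = 1 := by ext; simp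
        refine Prod.ext (one_smul F p.1) ?_
        change inl (⟨_, hc 1 p.1⟩ : H) * p.2 = p.2
        rw [this, _root_.map_one, one_mul]
      map_mul' := by
        intro e e'
        funext p
        change _ = ((e : F) • (e' : F) • p.1, inl ⟨_, hc e ((e' : F) • p.1)⟩ *
          (inl ⟨_, hc e' p.1⟩ * p.2))
        have : (⟨_, hc (e * e' : E) p.1⟩ : H) = ⟨_, hc e ((e' : F) • p.1)⟩ * ⟨_, hc e' p.1⟩ := by
          ext; simp [mul_smul, mul_assoc]
        rw [← mul_assoc, ← map_mul, ← this, ← mul_smul]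
        rfl }
  let b : Z →* Function.End ((F ⧸ H) × W) :=
    { toFun := fun z p => (p.1, inr z * p.2)
      map_one' := by funext p; simp; rfl
      map_mul' := by
        intro z z'
        funext p
        simp only [map_mul, mul_assoc]
        rfl }
  have key : ∀ v w : W, lift a b (map (Subgroup.inclusion hHE) (MonoidHom.id Z) v)
      (((1 : F) : F ⧸ H), w) = (((1 : F) : F ⧸ H), v * w) := by
    intro v
    induction v using Monoid.Coprod.induction_on with
    | inl h =>
      intro w
      have h1 : (h : F) • ((1 : F) : F ⧸ H) = ((1 : F) : F ⧸ H) := by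
        rw [MulAction.Quotient.smul_coe, QuotientGroup.eq]; simp
      have h2 : (⟨_, hc h ((1 : F) : F ⧸ H)⟩ : H) = h := by ext; simp [h1, hσ1]
      rw [map_apply_inl, lift_apply_inl]
      change ((h : F) • ((1 : F) : F ⧸ H), inl ⟨_, hc h ((1 : F) : F ⧸ H)⟩ * w) = _
      exact Prod.ext h1 (by rw [h2])
    | inr z => intro w; rw [map_apply_inr, lift_apply_inr]; rfl
    | mul x y hx hy =>
      intro w
      rw [map_mul, map_mul, mul_assoc, ← hx, ← hy]
      rfl
  intro v v' hvv
  have h := key v 1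
  rw [hvv, key v' 1] at h
  simpa using (Prod.ext_iff.1 h).2.symm

theorem Depends.mono {F : Type*} [Group F] {H E : Subgroup F} (hHE : H ≤ E) {g : F}
    (h : Depends H g) : Depends E g := by
  intro hinj
  apply h
  have : phi H g = (phi E g).comp
      (Monoid.Coprod.map (Subgroup.inclusion hHE) (MonoidHom.id (FreeGroup Unit))) := by
    ext <;> simp [phi]
  rw [this]
  exact hinj.comp (Monoid.Coprod.map_inclusion_injective hHE)

theorem depends_of_mem {F : Type*} [Group F] {H : Subgroup F} {g : F} (hg : g ∈ H) :
    Depends H g := by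
  intro hinj
  have h : phi H g (Monoid.Coprod.inl ⟨g, hg⟩) = phi H g (Monoid.Coprod.inr (FreeGroup.of ())) := by
    simp [phi]
  have := congrArg Monoid.Coprod.snd (hinj h)
  simp at this

theorem le_DepSubgroup {F : Type*} [Group F] (H : Subgroup F) : H ≤ DepSubgroup H :=
  fun _ hg => Subgroup.subset_closure (depends_of_mem hg)

theorem range_phi {F : Type*} [Group F] (H : Subgroup F) (g : F) :
    (phi H g).range = H ⊔ Subgroup.zpowers g := by
  rw [phi, Monoid.Coprod.range_lift, Subgroup.range_subtype, FreeGroup.range_lift_eq_closure,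
    Set.range_const, Subgroup.zpowers_eq_closure]

theorem Depends.rk_sup_zpowers_le {F : Type} [Group F] [IsFreeGroup F] {E : Subgroup F} {g : F}
    (h : Depends E g) {r : ℕ} (hE : rk E ≤ r) : rk (E ⊔ Subgroup.zpowers g) ≤ r := by
  obtain ⟨s, hs, hEs, ⟨e⟩⟩ := exists_mulEquiv_of_rk_le hE
  let κ : FreeGroup (Fin (s + 1)) →* E ∗ FreeGroup Unit :=
    FreeGroup.lift (Fin.snoc (α := fun _ => E ∗ FreeGroup Unit)
      (fun i => Monoid.Coprod.inl (e (FreeGroup.of i))) (Monoid.Coprod.inr (FreeGroup.of ())))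
  have hκ : Function.Surjective κ := by
    rw [← MonoidHom.range_eq_top, eq_top_iff, ← Monoid.Coprod.range_inl_sup_range_inr, sup_le_iff]
    constructor
    · have : (Monoid.Coprod.inl : E →* E ∗ FreeGroup Unit).range =
          ((Monoid.Coprod.inl : E →* E ∗ FreeGroup Unit).comp e.toMonoidHom).range := by
        have he : e.toMonoidHom.range = ⊤ := MonoidHom.range_eq_top.2 e.surjective
        rw [MonoidHom.range_comp, he, ← MonoidHom.range_eq_map]
      rw [this, MonoidHom.range_eq_map, ← FreeGroup.closure_range_of, MonoidHom.map_closure,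
        Subgroup.closure_le]
      rintro _ ⟨_, ⟨i, rfl⟩, rfl⟩
      exact ⟨FreeGroup.of i.castSucc, by simp [κ]⟩
    · rw [MonoidHom.range_eq_map, ← FreeGroup.closure_range_of, MonoidHom.map_closure,
        Subgroup.closure_le]
      rintro _ ⟨_, ⟨i, rfl⟩, rfl⟩
      exact ⟨FreeGroup.of (Fin.last s), by simp [κ]⟩
  have hrange : ((phi E g).comp κ).range = E ⊔ Subgroup.zpowers g := by
    rw [MonoidHom.range_comp, MonoidHom.range_eq_top.2 hκ, ← MonoidHom.range_eq_map, range_phi]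
  rw [← hrange]
  have hle := rk_range_le ((phi E g).comp κ)
  rw [Cardinal.mk_fin] at hle
  obtain ⟨t, ht, htr, ⟨e'⟩⟩ := exists_mulEquiv_of_rk_le hle
  rw [htr]
  norm_cast
  by_contra hlt
  obtain rfl : t = s + 1 := by omega
  have hinj := FreeGroup.injective_of_surjective_of_mulEquiv e'
    ((phi E g).comp κ).rangeRestrict (MonoidHom.rangeRestrict_surjective _)
  apply h
  intro x y hxy
  obtain ⟨x, rfl⟩ := hκ x
  obtain ⟨y, rfl⟩ := hκ y
  rw [hinj (Subtype.ext hxy)]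

theorem rk_sup_closure_le {F : Type} [Group F] [IsFreeGroup F] {H : Subgroup F} {r : ℕ}
    (hH : rk H ≤ r) {S : Set F} (hS : S.Finite) (hdep : S ⊆ depSet H) :
    rk (H ⊔ Subgroup.closure S) ≤ r := by
  induction S, hS using Set.Finite.induction_on with
  | empty => simpa using hH
  | @insert g S hg hfin ih =>
    have hd : Depends H g := hdep (Set.mem_insert g S)
    have := (hd.mono le_sup_left).rk_sup_zpowers_le (ih ((Set.subset_insert g S).trans hdep))
    rwa [sup_assoc, Subgroup.zpowers_eq_closure, ← Subgroup.closure_union,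
      Set.union_singleton] at this

theorem Subgroup.exists_finite_subset_closure {F : Type*} [Group F] {X T : Set F} (hT : T.Finite)
    (h : T ⊆ closure X) : ∃ S ⊆ X, S.Finite ∧ T ⊆ closure S := by
  have key : ∀ x ∈ closure X, ∃ S ⊆ X, S.Finite ∧ x ∈ closure S := by
    intro x hx
    induction hx using closure_induction with
    | mem x hx => exact ⟨{x}, by simpa using hx, Set.finite_singleton x, subset_closure rfl⟩
    | one => exact ⟨∅, by simp, Set.finite_empty, one_mem _⟩
    | mul x y _ _ hx hy =>
      obtain ⟨S, hS, hSf, hx⟩ := hx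
      obtain ⟨S', hS', hSf', hy⟩ := hy
      exact ⟨S ∪ S', Set.union_subset hS hS', hSf.union hSf',
        mul_mem (closure_mono Set.subset_union_left hx) (closure_mono Set.subset_union_right hy)⟩
    | inv x _ hx =>
      obtain ⟨S, hS, hSf, hx⟩ := hx
      exact ⟨S, hS, hSf, inv_mem hx⟩
  choose! f hfX hff hfm using key
  refine ⟨⋃ x ∈ T, f x, Set.iUnion₂_subset fun x hx => hfX x (h hx),
    hT.biUnion fun x hx => hff x (h hx), fun x hx => ?_⟩
  exact closure_mono (Set.subset_biUnion_of_mem hx) (hfm x (h hx))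

theorem rk_DepSubgroup_le {F : Type} [Group F] [IsFreeGroup F] {H : Subgroup F} {r : ℕ}
    (hH : rk H ≤ r) : rk (DepSubgroup H) ≤ r := by
  refine rk_le_of_forall_finite fun T hT hTD => ?_
  obtain ⟨S, hS, hSf, hTS⟩ := Subgroup.exists_finite_subset_closure hT hTD
  exact ⟨H ⊔ Subgroup.closure S, sup_le (le_DepSubgroup H) (Subgroup.closure_mono hS),
    fun x hx => Subgroup.mem_sup_right (hTS hx), rk_sup_closure_le hH hSf hS⟩

/-! ### Intersections with standard free factors are retracts -/

theorem FreeGroup.exists_retraction_inf_closure {α : Type*} (s : Set α)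
    (K : Subgroup (FreeGroup α)) :
    ∃ ρ : K →* (K ⊓ Subgroup.closure (of '' s) : Subgroup (FreeGroup α)),
      ∀ l, ρ (Subgroup.inclusion inf_le_left l) = l := by
  classical
  set A := Subgroup.closure (of '' s)
  let Q := FreeGroup α ⧸ K
  let base : Q := ((1 : FreeGroup α) : Q)
  let orb : Set Q := {q | ∃ y ∈ A, (y : Q) = q}
  have hbase : base ∈ orb := ⟨1, one_mem _, rfl⟩
  obtain ⟨σ, hσA, hσ, hσ1⟩ : ∃ σ : Q → FreeGroup α,
      (∀ q ∈ orb, σ q ∈ A) ∧ (∀ q ∈ orb, (σ q : Q) = q) ∧ σ base = 1 := by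
    choose! τ hτA hτ using fun (q : Q) (hq : q ∈ orb) => hq
    have hτK : (τ base)⁻¹ ∈ K := by
      have := hτ base hbase
      rw [QuotientGroup.eq] at this
      simpa using this
    refine ⟨fun q => τ q * (τ base)⁻¹, fun q hq => mul_mem (hτA q hq) (inv_mem (hτA _ hbase)),
      fun q hq => ?_, mul_inv_cancel _⟩
    rw [QuotientGroup.mk_mul_of_mem _ hτK, hτ q hq]
  have horb : ∀ y ∈ A, ∀ q ∈ orb, y • q ∈ orb := by
    rintro y hy _ ⟨z, hz, rfl⟩
    exact ⟨y * z, mul_mem hy hz, rfl⟩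
  have hcK : ∀ y ∈ A, ∀ q ∈ orb, (σ (y • q))⁻¹ * y * σ q ∈ K ⊓ A := by
    intro y hy q hq
    refine Subgroup.mem_inf.2 ⟨?_, mul_mem (mul_mem (inv_mem (hσA _ (horb y hy q hq))) hy) (hσA q hq)⟩
    rw [mul_assoc, ← QuotientGroup.eq, hσ _ (horb y hy q hq), ← smul_eq_mul,
      ← MulAction.Quotient.smul_coe, hσ q hq]
  let c : α → Q → FreeGroup α := fun a q =>
    if a ∈ s ∧ q ∈ orb then (σ (of a • q))⁻¹ * of a * σ q else 1
  have hc : ∀ a q, c a q ∈ K ⊓ A := by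
    intro a q
    by_cases h : a ∈ s ∧ q ∈ orb
    · simp only [c, h, and_self, if_true]
      exact hcK _ (Subgroup.subset_closure ⟨a, h.1, rfl⟩) q h.2
    · simp only [c, h, if_false]
      exact one_mem _
  let P : α → Equiv.Perm (Q × FreeGroup α) := fun a =>
    { toFun := fun p => (of a • p.1, c a p.1 * p.2)
      invFun := fun p => ((of a)⁻¹ • p.1, (c a ((of a)⁻¹ • p.1))⁻¹ * p.2)
      left_inv := fun p => by simp
      right_inv := fun p => by simp }
  have key : ∀ g : FreeGroup α, ∀ q, ∃ d ∈ K ⊓ A, ∀ x, lift P g (q, x) = (g • q, d * x) := by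
    intro g
    induction g using FreeGroup.induction_on with
    | C1 => exact fun q => ⟨1, one_mem _, fun x => by simp⟩
    | of a => exact fun q => ⟨c a q, hc a q, fun x => by simp [P]⟩
    | inv_of a _ =>
      refine fun q => ⟨_, inv_mem (hc a ((of a)⁻¹ • q)), fun x => ?_⟩
      rw [_root_.map_inv, lift_apply_of]
      rfl
    | mul x y hx hy =>
      intro q
      obtain ⟨d, hd, hy⟩ := hy q
      obtain ⟨d', hd', hx⟩ := hx (y • q)
      exact ⟨d' * d, mul_mem hd' hd, fun z => by
        rw [_root_.map_mul, Equiv.Perm.mul_apply, hy, hx, mul_smul, mul_assoc]⟩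
  choose d hd hΦ using key
  have hAB : ∀ y ∈ A, ∀ q ∈ orb, ∀ x,
      lift P y (q, x) = (y • q, (σ (y • q))⁻¹ * y * σ q * x) := by
    intro y hy
    induction hy using Subgroup.closure_induction with
    | mem y hy =>
      obtain ⟨a, ha, rfl⟩ := hy
      intro q hq x
      simp [P, c, ha, hq]
    | one => intro q hq x; simp
    | mul y z hy hz ihy ihz =>
      intro q hq x
      rw [_root_.map_mul, Equiv.Perm.mul_apply, ihz q hq, ihy _ (horb z hz q hq), mul_smul]
      simp [mul_assoc]
    | inv y hy ih =>
      intro q hq x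
      rw [_root_.map_inv, Equiv.Perm.inv_eq_iff_eq, ih _ (horb _ (inv_mem hy) q hq)]
      simp [mul_assoc]
  have hfix : ∀ k ∈ K, k • base = base := by
    intro k hk
    change (((k * 1 : FreeGroup α)) : Q) = _
    rw [QuotientGroup.eq]
    simpa using hk
  let ρ : K →* (K ⊓ A : Subgroup (FreeGroup α)) :=
    { toFun := fun k => ⟨d k base, hd k base⟩
      map_one' := by
        have := hΦ 1 base 1
        ext
        simpa using this.symm
      map_mul' := by
        intro k k'
        have h := hΦ (k * k') base 1
        rw [_root_.map_mul, Equiv.Perm.mul_apply, hΦ k', hfix _ k'.2, hΦ k] at h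
        ext
        simpa using (Prod.ext_iff.1 h).2.symm }
  refine ⟨ρ, fun l => Subtype.ext ?_⟩
  have h := hΦ l base 1
  rw [hAB _ l.2.2 base hbase, hfix _ l.2.1, hσ1] at h
  have hd' : d l base = l := by simpa using (Prod.ext_iff.1 h).2.symm
  exact hd'

/-! ### The stages of a subgroup -/

theorem stageSubgroup_mono (n : ℕ) {i j : ℕ} (h : i ≤ j) :
    stageSubgroup n i ≤ stageSubgroup n j :=
  Subgroup.closure_mono (Set.image_mono fun _ hk => lt_of_lt_of_le hk h)

theorem stageSubgroup_zero (n : ℕ) : stageSubgroup n 0 = ⊥ := by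
  simp [stageSubgroup]

theorem stageSubgroup_self (n : ℕ) : stageSubgroup n n = ⊤ := by
  simp [stageSubgroup, FreeGroup.closure_range_of]

theorem exists_retraction_inf_stageSubgroup {n : ℕ} (K : Subgroup (FreeGroup (Fin n)))
    {i j : ℕ} (h : i ≤ j) :
    ∃ ρ : (K ⊓ stageSubgroup n j : Subgroup (FreeGroup (Fin n))) →*
        (K ⊓ stageSubgroup n i : Subgroup (FreeGroup (Fin n))),
      ∀ l, ρ (Subgroup.inclusion (inf_le_inf_left K (stageSubgroup_mono n h)) l) = l := by
  obtain ⟨ρ, hρ⟩ := FreeGroup.exists_retraction_inf_closure {k : Fin n | (k : ℕ) < i}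
    (K ⊓ stageSubgroup n j)
  have heq : K ⊓ stageSubgroup n j ⊓ stageSubgroup n i = K ⊓ stageSubgroup n i := by
    rw [inf_assoc, inf_eq_right.2 (stageSubgroup_mono n h)]
  refine ⟨(MulEquiv.subgroupCongr heq).toMonoidHom.comp ρ, fun l => Subtype.ext ?_⟩
  have h := congrArg Subtype.val (hρ ((MulEquiv.subgroupCongr heq).symm l))
  exact h

theorem rk_inf_stageSubgroup_le {n : ℕ} (K : Subgroup (FreeGroup (Fin n))) {i j r : ℕ}
    (h : i ≤ j) (hr : rk (K ⊓ stageSubgroup n j) ≤ r) : rk (K ⊓ stageSubgroup n i) ≤ r := by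
  obtain ⟨ρ, hρ⟩ := exists_retraction_inf_stageSubgroup K h
  exact rk_le_of_surjective ρ (fun l => ⟨_, hρ l⟩) hr

theorem inf_stageSubgroup_le_of_rk_le {n : ℕ} (K : Subgroup (FreeGroup (Fin n))) {i j r : ℕ}
    (h : i ≤ j) (hr : rk (K ⊓ stageSubgroup n j) ≤ r) (hr' : r ≤ rk (K ⊓ stageSubgroup n i)) :
    K ⊓ stageSubgroup n j ≤ K ⊓ stageSubgroup n i := by
  obtain ⟨ρ, hρ⟩ := exists_retraction_inf_stageSubgroup K h
  exact le_of_retraction_of_rk_le _ ρ hρ hr hr'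

theorem IsEchelon.rk_inf_stageSubgroup_le {n : ℕ} {H : Subgroup (FreeGroup (Fin n))}
    (hH : IsEchelon H) {i : ℕ} (hi : i ≤ n) : rk (H ⊓ stageSubgroup n i) ≤ i := by
  induction i with
  | zero =>
    rw [stageSubgroup_zero, inf_bot_eq]
    have := rk_range_le (1 : FreeGroup (Fin 0) →* FreeGroup (Fin n))
    rwa [MonoidHom.range_one, Cardinal.mk_fin] at this
  | succ i ih =>
    refine (hH (i + 1) (by omega) hi).trans ?_
    push_cast
    exact add_le_add_left (ih (by omega)) 1

/-- if `H` is in echelon form then so is `Dep H`. -/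
theorem isEchelon_DepSubgroup {n : ℕ} (H : Subgroup (FreeGroup (Fin n)))
    (hH : IsEchelon H) : IsEchelon (DepSubgroup H) := by
  set D := DepSubgroup H
  have hHD : H ≤ D := le_DepSubgroup H
  have hf : ∀ i, ∃ r : ℕ, i ≤ n → rk (H ⊓ stageSubgroup n i) = r := by
    intro i
    by_cases hi : i ≤ n
    · obtain ⟨r, -, hr, -⟩ := exists_mulEquiv_of_rk_le (hH.rk_inf_stageSubgroup_le hi)
      exact ⟨r, fun _ => hr⟩
    · exact ⟨0, fun h => absurd h hi⟩
  choose f hf using hf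
  have hDn : rk (D ⊓ stageSubgroup n n) ≤ f n := by
    rw [stageSubgroup_self, inf_top_eq]
    apply rk_DepSubgroup_le
    rw [← hf n le_rfl, stageSubgroup_self, inf_top_eq]
  have hg : ∀ i, ∃ r : ℕ, i ≤ n → rk (D ⊓ stageSubgroup n i) = r := by
    intro i
    by_cases hi : i ≤ n
    · obtain ⟨r, -, hr, -⟩ := exists_mulEquiv_of_rk_le (rk_inf_stageSubgroup_le D hi hDn)
      exact ⟨r, fun _ => hr⟩
    · exact ⟨0, fun h => absurd h hi⟩
  choose g hg using hg
  have hstep : ∀ i, i + 1 ≤ n → f (i + 1) ≤ f i + 1 := by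
    intro i hi
    have := hH (i + 1) (by omega) hi
    rw [Nat.add_sub_cancel, hf _ hi, hf i (by omega)] at this
    exact_mod_cast this
  have hmono : ∀ i, i + 1 ≤ n → g i ≤ g (i + 1) := by
    intro i hi
    have := rk_inf_stageSubgroup_le D (Nat.le_succ i) (hg _ hi).le
    rw [hg i (by omega)] at this
    exact_mod_cast this
  have hjump : ∀ i, i + 1 ≤ n → g (i + 1) ≤ g i → f (i + 1) ≤ f i := by
    intro i hi hle
    have hD := inf_stageSubgroup_le_of_rk_le D (Nat.le_succ i) (hg _ hi).le
      (by rw [hg i (by omega)]; exact_mod_cast hle)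
    have hHeq : H ⊓ stageSubgroup n (i + 1) = H ⊓ stageSubgroup n i :=
      le_antisymm (fun x hx => ⟨hx.1, (hD ⟨hHD hx.1, hx.2⟩).2⟩)
        (inf_le_inf_left H (stageSubgroup_mono n (Nat.le_succ i)))
    have := hf _ hi
    rw [hHeq, hf i (by omega)] at this
    exact (Nat.cast_injective this).ge
  have hinc : ∀ i, i + 1 ≤ n → f (i + 1) + g i ≤ f i + g (i + 1) := by
    intro i hi
    have := hstep i hi
    have := hmono i hi
    have := hjump i hi
    by_cases h : g (i + 1) ≤ g i <;> omega
  have hf0 : f 0 = 0 := by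
    have := hH.rk_inf_stageSubgroup_le (Nat.zero_le n)
    rw [hf 0 (Nat.zero_le n)] at this
    simpa using this
  have hle : ∀ i, i ≤ n → f i ≤ g i := by
    intro i
    induction i with
    | zero => omega
    | succ i ih =>
      intro hi
      have := hinc i hi
      have := ih (by omega)
      omega
  have hge : ∀ i, i ≤ n → g i ≤ f i := by
    intro i hi
    induction hi using Nat.decreasingInduction with
    | self =>
      rw [hg n le_rfl] at hDn
      exact_mod_cast hDn
    | of_succ i hi ih =>
      have := hinc i hi
      omega
  intro i h1 hi
  obtain ⟨i, rfl⟩ : ∃ j, i = j + 1 := ⟨i - 1, by omega⟩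
  rw [Nat.add_sub_cancel, hg _ hi, hg i (by omega)]
  have h2 := hge _ hi
  have h3 := hle i (by omega)
  have h4 := hstep i hi
  exact_mod_cast (by omega : g (i + 1) ≤ g i + 1)
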